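/- (Rank-based characterization for (k+1)-step linear predictors, statement 2.) Consider the chain-structured system with nonlinearity concentrated in x_k (as defined in the context), where additionally 𝒳 is open and convex, 𝒰 is open, and the dynamics map from 𝒳 × 𝒰 onto 𝒳 is surjective. Suppose the system admits a (k+1)-step linear predictor, and suppose rank(M_k) = r_k with 0 < r_k < n_k. Then there exists an invertible matrix T̄ ∈ ℝ^{n_k×n_k} such that, under the coordinate change col(x̄₁, …, x̄_{k+1}) := blockdiag(I_{n−n_k}, T̄)·x, with x̄_i = x_i for i = 1, …, k−1, x̄_k ∈ ℝ^{r_k}, x̄_{k+1} ∈ ℝ^{n_k−r_k}, the dynamics take the form x̄₁⁺ = M̄₁u + C̄₁x̄_{1:k} + ḡ₁(x̄_{k+1}); x̄_i⁺ = M̄_i x̄_{i−1} + C̄_i x̄_{i:k} + ḡ_i(x̄_{k+1}) for i = 2, …, k; x̄_{k+1}⁺ = M̄_{k+1} x̄_k + ḡ_{k+1}(x̄_{k+1}); where M̄_i has full row rank for i = 1, …, k, and the C̄_i and ḡ_i are suitable matrices and functions. -/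

import Mathlib

open Matrix

noncomputable section

/-- Index type for a block-partitioned state. -/
abbrev Blk {K : ℕ} (dims : Fin K → ℕ) : Type := (i : Fin K) × Fin (dims i)

/-- The `i`-th block of a block-partitioned state. -/
def blk {K : ℕ} {dims : Fin K → ℕ} (x : Blk dims → ℝ) (i : Fin K) : Fin (dims i) → ℝ :=
  fun j => x ⟨i, j⟩

/-- The `N`-step iterated dynamics `f_N`. -/
def iterDyn {ι : Type} {m : ℕ} (f : (ι → ℝ) → (Fin m → ℝ) → (ι → ℝ)) :
    (N : ℕ) → (ι → ℝ) → (Fin N → (Fin m → ℝ)) → (ι → ℝ)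
  | 0, x, _ => x
  | N + 1, x, u => f (iterDyn f N x (fun i => u i.castSucc)) (u (Fin.last N))

/-- The system `x⁺ = f(x,u)` admits an `N`-step linear predictor on `X`, `U`. -/
def HasNStepLinearPredictor {ι : Type} [Fintype ι] {m : ℕ}
    (f : (ι → ℝ) → (Fin m → ℝ) → (ι → ℝ))
    (X : Set (ι → ℝ)) (U : Set (Fin m → ℝ)) (N : ℕ) : Prop :=
  ∃ (Φ : (ι → ℝ) → (ι → ℝ)) (B : Matrix ι (Fin N × Fin m) ℝ),
    ∀ x ∈ X, ∀ u : Fin N → (Fin m → ℝ), (∀ i, u i ∈ U) →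
      iterDyn f N x u = Φ x + B.mulVec (fun p => u p.1 p.2)

/-- The chain-structured system with nonlinearity concentrated in the last block. -/
def IsChainSystem {k m : ℕ} (dims : Fin (k + 1) → ℕ)
    (f : (Blk dims → ℝ) → (Fin m → ℝ) → (Blk dims → ℝ))
    (X : Set (Blk dims → ℝ)) (U : Set (Fin m → ℝ))
    (M₀ : Matrix (Fin (dims 0)) (Fin m) ℝ)
    (M : (i : Fin k) → Matrix (Fin (dims i.succ)) (Fin (dims i.castSucc)) ℝ)
    (C : (i : Fin (k + 1)) → Matrix (Fin (dims i)) (Blk dims) ℝ)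
    (g : (i : Fin (k + 1)) → (Fin (dims (Fin.last k)) → ℝ) → Fin (dims i) → ℝ) : Prop :=
  (∀ i : Fin (k + 1), ∀ q : Blk dims,
      ¬((i : ℕ) ≤ (q.1 : ℕ) ∧ (q.1 : ℕ) < k) → ∀ j, C i j q = 0) ∧
  M₀.rank = dims 0 ∧
  (∀ i : Fin k, (i : ℕ) < k - 1 → (M i).rank = dims i.succ) ∧
  (∀ x ∈ X, ∀ u ∈ U,
    blk (f x u) 0 = M₀.mulVec u + (C 0).mulVec x + g 0 (blk x (Fin.last k)) ∧
    ∀ i : Fin k,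
      blk (f x u) i.succ =
        (M i).mulVec (blk x i.castSucc) + (C i.succ).mulVec x +
          g i.succ (blk x (Fin.last k)))

/-!
Write the system as `x⁺ = A x + B u + G (p x)`, where `p` reads off the last block.  An increment
`v` of the first input travels down the chain one block per step, so during the first `k` steps
(`k` the number of blocks) it is invisible to `p`; it shifts the state linearly and arrives in the
last block as an arbitrary vector of `range M_k`.  One step later a linear predictor allows only a
response that is linear in `v`.  As every state is reachable, `G` therefore has, near each point
of `p(X)`, the same linear increments along `range M_k`; moving along segments of the convex set
`p(X)`, this holds globally.  In coordinates splitting off `range M_k`, `G` is linear in the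
components along `range M_k` plus a function of the complementary ones.
-/

section LinearAlgebra

variable {K : Type*} [Field K]

lemma mulVec_surjective_iff_rank_eq_card {m n : Type*} [Fintype m] [Fintype n]
    (A : Matrix m n K) : Function.Surjective A.mulVec ↔ A.rank = Fintype.card m := by
  rw [← Module.finrank_fintype_fun_eq_card K, Matrix.rank]
  exact (LinearMap.range_eq_top (f := A.mulVecLin)).symm.trans
    ⟨fun h => by rw [h, finrank_top], Submodule.eq_top_of_finrank_eq⟩

lemma rank_toMatrix'_eq_card_of_surjective {m n : Type*} [Fintype m] [Fintype n] [DecidableEq n]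
    {φ : (n → K) →ₗ[K] (m → K)} (hφ : Function.Surjective φ) :
    (LinearMap.toMatrix' φ).rank = Fintype.card m :=
  (mulVec_surjective_iff_rank_eq_card _).mp
    ((funext (LinearMap.toMatrix'_mulVec φ) : (LinearMap.toMatrix' φ).mulVec = φ) ▸ hφ)

lemma exists_linearEquiv_prod_mem_iff_snd_eq_zero {E L R : Type*}
    [AddCommGroup E] [Module K E] [FiniteDimensional K E]
    [AddCommGroup L] [Module K L] [FiniteDimensional K L]
    [AddCommGroup R] [Module K R] [FiniteDimensional K R] (W : Submodule K E)
    (hL : Module.finrank K W = Module.finrank K L)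
    (hE : Module.finrank K E = Module.finrank K L + Module.finrank K R) :
    ∃ e : E ≃ₗ[K] L × R, ∀ y, y ∈ W ↔ (e y).2 = 0 := by
  obtain ⟨W', hW⟩ := W.exists_isCompl
  have hR : Module.finrank K W' = Module.finrank K R := by
    have := Submodule.finrank_add_eq_of_isCompl hW
    lia
  refine ⟨(W.prodEquivOfIsCompl W' hW).symm ≪≫ₗ
    (LinearEquiv.ofFinrankEq W L hL).prodCongr (LinearEquiv.ofFinrankEq W' R hR), fun y => ?_⟩
  simp

lemma exists_matrix_mulVec_sum_eq {n r s : Type*} [Fintype n] [DecidableEq n]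
    [Fintype r] [DecidableEq r] [Fintype s] [DecidableEq s]
    (e : (n → K) ≃ₗ[K] (r → K) × (s → K)) :
    ∃ (T : Matrix (r ⊕ s) n K) (S : Matrix n (r ⊕ s) K), T * S = 1 ∧ S * T = 1 ∧
      (fun y a => (T *ᵥ y) (Sum.inl a)) = (fun y => (e y).1) ∧
      (fun y b => (T *ᵥ y) (Sum.inr b)) = (fun y => (e y).2) := by
  let e' : (n → K) ≃ₗ[K] (r ⊕ s → K) :=
    e ≪≫ₗ (LinearEquiv.sumArrowLequivProdArrow r s K K).symm
  have hT (y : n → K) : LinearMap.toMatrix' e'.toLinearMap *ᵥ y = e' y :=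
    LinearMap.toMatrix'_mulVec _ y
  refine ⟨LinearMap.toMatrix' e'.toLinearMap, LinearMap.toMatrix' e'.symm.toLinearMap, ?_, ?_,
    ?_, ?_⟩
  · rw [← LinearMap.toMatrix'_comp, e'.comp_symm, LinearMap.toMatrix'_id]
  · rw [← LinearMap.toMatrix'_comp, e'.symm_comp, LinearMap.toMatrix'_id]
  · simp only [hT]
    rfl
  · simp only [hT]
    rfl

end LinearAlgebra

section LocalIncrements

variable {V E F : Type*} [AddCommGroup V] [Module ℝ V] [TopologicalSpace V] [ContinuousSMul ℝ V]
  [AddCommGroup E] [Module ℝ E] [AddCommGroup F] [Module ℝ F]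
  {Y : Set E} {P : V →ₗ[ℝ] E} {D : V →ₗ[ℝ] F} {G : E → F}

lemma eq_add_of_convex_of_eventually_eq_add (hY : Convex ℝ Y)
    (hG : ∀ y ∈ Y, ∀ᶠ v in nhds (0 : V), G (y + P v) = G y + D v)
    {y : E} (hy : y ∈ Y) {v : V} (hyv : y + P v ∈ Y) : G (y + P v) = G y + D v := by
  let φ : unitInterval → F := fun t => G (y + P ((t : ℝ) • v)) - D ((t : ℝ) • v)
  have hφ : IsLocallyConstant φ := by
    rw [IsLocallyConstant.iff_eventually_eq]
    intro t
    have hmem : y + P ((t : ℝ) • v) ∈ Y := by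
      rw [map_smul]
      exact hY.add_smul_mem hy hyv t.2
    have hsmall : Filter.Tendsto (fun s : unitInterval => ((s : ℝ) - t) • v) (nhds t)
        (nhds 0) := by
      have hcont : Continuous fun s : unitInterval => ((s : ℝ) - t) • v := by fun_prop
      simpa using hcont.tendsto t
    filter_upwards [hsmall.eventually (hG _ hmem)] with s hs
    have hsplit : (s : ℝ) • v = (t : ℝ) • v + ((s : ℝ) - t) • v := by module
    simp only [φ]
    rw [hsplit, map_add, ← add_assoc, hs, map_add]
    abel
  have hφ01 : φ 1 = φ 0 := hφ.apply_eq_of_preconnectedSpace 1 0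
  simpa [φ, sub_eq_iff_eq_add] using hφ01

lemma exists_eq_linear_add_of_convex {L R : Type*} [AddCommGroup L] [Module ℝ L]
    [AddCommGroup R] [Module ℝ R] (hY : Convex ℝ Y)
    (hG : ∀ y ∈ Y, ∀ᶠ v in nhds (0 : V), G (y + P v) = G y + D v)
    (e : E ≃ₗ[ℝ] L × R) (he : ∀ y, (e y).2 = 0 → y ∈ LinearMap.range P) :
    ∃ (Λ : L →ₗ[ℝ] F) (Γ : R → F), ∀ y ∈ Y, G y = Λ (e y).1 + Γ (e y).2 := by
  have hmem (l : L) : e.symm (l, 0) ∈ LinearMap.range P := he _ (by simp)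
  obtain ⟨σ, hσ⟩ := Module.projective_lifting_property P.rangeRestrict
    ((e.symm.toLinearMap ∘ₗ LinearMap.inl ℝ L R).codRestrict _ hmem) P.surjective_rangeRestrict
  have hPσ (l : L) : P (σ l) = e.symm (l, 0) := congrArg Subtype.val (LinearMap.congr_fun hσ l)
  have hfactor : Function.FactorsThrough (fun y : Y => G y - D (σ (e y).1))
      (fun y : Y => (e y).2) := by
    rintro ⟨y, hy⟩ ⟨y', hy'⟩ (hsnd : (e y).2 = (e y').2)
    have hdiff : y + P (σ ((e y').1 - (e y).1)) = y' := by
      apply e.injective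
      rw [hPσ, map_add, e.apply_symm_apply]
      ext <;> simp [hsnd]
    have hinc := eq_add_of_convex_of_eventually_eq_add hY hG hy (hdiff.symm ▸ hy')
    rw [hdiff, map_sub, map_sub] at hinc
    simp only [hinc]
    abel
  obtain ⟨Γ, hΓ⟩ := (Function.factorsThrough_iff _).mp hfactor
  exact ⟨D ∘ₗ σ, Γ, fun y hy => sub_eq_iff_eq_add'.mp (congrFun hΓ ⟨y, hy⟩)⟩

end LocalIncrements

section Iterates

variable {ι : Type} {m : ℕ} {f : (ι → ℝ) → (Fin m → ℝ) → (ι → ℝ)}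
  {X : Set (ι → ℝ)} {U : Set (Fin m → ℝ)}

lemma iterDyn_succ {N : ℕ} (x : ι → ℝ) (u : Fin (N + 1) → Fin m → ℝ) :
    iterDyn f (N + 1) x u = f (iterDyn f N x fun i => u i.castSucc) (u (Fin.last N)) := rfl

lemma iterDyn_mem (hf : ∀ x ∈ X, ∀ u ∈ U, f x u ∈ X) {N : ℕ} {x : ι → ℝ} (hx : x ∈ X)
    {u : Fin N → Fin m → ℝ} (hu : ∀ i, u i ∈ U) : iterDyn f N x u ∈ X := by
  induction N with
  | zero => exact hx
  | succ N ih => exact hf _ (ih fun i => hu i.castSucc) _ (hu _)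

lemma iterDyn_snoc {N : ℕ} (x : ι → ℝ) (u : Fin N → Fin m → ℝ) (w : Fin m → ℝ) :
    iterDyn f (N + 1) x (Fin.snoc (α := fun _ => Fin m → ℝ) u w) = f (iterDyn f N x u) w := by
  simp [iterDyn_succ]

lemma exists_iterDyn_eq (hsurj : ∀ y ∈ X, ∃ x ∈ X, ∃ u ∈ U, f x u = y) (N : ℕ)
    {y : ι → ℝ} (hy : y ∈ X) :
    ∃ x ∈ X, ∃ u : Fin N → Fin m → ℝ, (∀ i, u i ∈ U) ∧ iterDyn f N x u = y := by
  induction N generalizing y with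
  | zero => exact ⟨y, hy, Fin.elim0, fun i => i.elim0, rfl⟩
  | succ N ih =>
    obtain ⟨z, hz, w, hw, rfl⟩ := hsurj y hy
    obtain ⟨x, hx, u, hu, rfl⟩ := ih hz
    exact ⟨x, hx, Fin.snoc u w, Fin.lastCases (by simpa using hw) (by simpa using hu),
      iterDyn_snoc x u w⟩

lemma HasNStepLinearPredictor.exists_linear_increment [Fintype ι] {N : ℕ}
    (h : HasNStepLinearPredictor f X U N) (i : Fin N) :
    ∃ D : (Fin m → ℝ) →ₗ[ℝ] (ι → ℝ), ∀ x ∈ X, ∀ (u u' : Fin N → Fin m → ℝ) (v : Fin m → ℝ),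
      (∀ j, u j ∈ U) → (∀ j, u' j ∈ U) → u' = u + Pi.single i v →
        iterDyn f N x u' = iterDyn f N x u + D v := by
  obtain ⟨Φ, Q, hQ⟩ := h
  let uncurry := (LinearEquiv.curry ℝ ℝ (Fin N) (Fin m)).symm
  refine ⟨Q.mulVecLin ∘ₗ uncurry.toLinearMap ∘ₗ LinearMap.single ℝ (fun _ => Fin m → ℝ) i, ?_⟩
  rintro x hx u _ v hu hu' rfl
  rw [hQ x hx u hu, hQ x hx _ hu', add_assoc]
  exact congrArg (Φ x + ·) (Q.mulVec_add (uncurry u) (uncurry (Pi.single i v)))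

end Iterates

/-- The dynamics `f` on `X × U` are in Lur'e form: linear in state and input up to a nonlinearity
`G` that sees the state only through the output `p x`. -/
def IsLureForm {ι E : Type*} {m : ℕ} [AddCommGroup E] [Module ℝ E]
    (f : (ι → ℝ) → (Fin m → ℝ) → (ι → ℝ)) (X : Set (ι → ℝ)) (U : Set (Fin m → ℝ))
    (A : (ι → ℝ) →ₗ[ℝ] (ι → ℝ)) (B : (Fin m → ℝ) →ₗ[ℝ] (ι → ℝ))
    (p : (ι → ℝ) →ₗ[ℝ] E) (G : E → (ι → ℝ)) : Prop :=
  ∀ x ∈ X, ∀ u ∈ U, f x u = A x + B u + G (p x)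

namespace IsLureForm

variable {ι : Type} {E : Type*} {m : ℕ} [AddCommGroup E] [Module ℝ E]
  {f : (ι → ℝ) → (Fin m → ℝ) → (ι → ℝ)} {X : Set (ι → ℝ)} {U : Set (Fin m → ℝ)}
  {A : (ι → ℝ) →ₗ[ℝ] (ι → ℝ)} {B : (Fin m → ℝ) →ₗ[ℝ] (ι → ℝ)}
  {p : (ι → ℝ) →ₗ[ℝ] E} {G : E → (ι → ℝ)} {t : ℕ}

lemma iterDyn_add_single (h : IsLureForm f X U A B p G) (hf : ∀ x ∈ X, ∀ u ∈ U, f x u ∈ X)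
    (hp : ∀ s < t, p ∘ₗ (A ^ s) ∘ₗ B = 0) {x : ι → ℝ} (hx : x ∈ X)
    {u u' : Fin (t + 1) → Fin m → ℝ} {v : Fin m → ℝ} (hu : ∀ i, u i ∈ U) (hu' : ∀ i, u' i ∈ U)
    (huu' : u' = u + Pi.single 0 v) :
    iterDyn f (t + 1) x u' = iterDyn f (t + 1) x u + (A ^ t) (B v) := by
  induction t with
  | zero =>
    have hfirst : u' 0 = u 0 + v := by simp [huu']
    change f x (u' 0) = f x (u 0) + B v
    rw [h x hx _ (hu' 0), h x hx _ (hu 0), hfirst, map_add]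
    abel
  | succ t ih =>
    have hinit : (fun i : Fin (t + 1) => u' i.castSucc) =
        (fun i => u i.castSucc) + Pi.single 0 v := by
      funext i
      simp [huu', Pi.single_apply]
    have hlast : u' (Fin.last (t + 1)) = u (Fin.last (t + 1)) := by simp [huu']
    have hstate := ih (fun s hs => hp s (hs.trans t.lt_succ_self)) (fun i => hu i.castSucc)
      (fun i => hu' i.castSucc) hinit
    have hunseen : p ((A ^ t) (B v)) = 0 := LinearMap.congr_fun (hp t t.lt_succ_self) v
    rw [iterDyn_succ x u', h _ (iterDyn_mem hf hx fun i => hu' i.castSucc) _ (hu' _), hlast, hstate,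
      iterDyn_succ x u, h _ (iterDyn_mem hf hx fun i => hu i.castSucc) _ (hu _), map_add, map_add,
      hunseen, add_zero, pow_succ', Module.End.mul_apply]
    abel

lemma exists_eventually_eq_add [Fintype ι] (h : IsLureForm f X U A B p G) (hU : IsOpen U)
    (hf : ∀ x ∈ X, ∀ u ∈ U, f x u ∈ X)
    (hsurj : ∀ y ∈ X, ∃ x ∈ X, ∃ u ∈ U, f x u = y)
    (hp : ∀ s < t, p ∘ₗ (A ^ s) ∘ₗ B = 0)
    (hpred : HasNStepLinearPredictor f X U (t + 2)) :
    ∃ D : (Fin m → ℝ) →ₗ[ℝ] (ι → ℝ), ∀ y ∈ p '' X, ∀ᶠ v in nhds (0 : Fin m → ℝ),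
      G (y + (p ∘ₗ (A ^ t) ∘ₗ B) v) = G y + D v := by
  obtain ⟨D, hD⟩ := hpred.exists_linear_increment 0
  refine ⟨D - A ∘ₗ (A ^ t) ∘ₗ B, ?_⟩
  rintro _ ⟨z, hz, rfl⟩
  obtain ⟨x, hx, u, hu, rfl⟩ := exists_iterDyn_eq hsurj (t + 1) hz
  have hnear : ∀ᶠ v in nhds (0 : Fin m → ℝ), u 0 + v ∈ U :=
    (continuous_const_add (u 0)).tendsto 0 |>.eventually
      (by simpa using hU.mem_nhds (hu 0))
  filter_upwards [hnear] with v hv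
  let u' : Fin (t + 1) → Fin m → ℝ := u + Pi.single 0 v
  have hu' : ∀ i, u' i ∈ U := Fin.cases (by simpa [u'] using hv) (by simp [u', hu])
  have hsnoc : (Fin.snoc u' (u 0) : Fin (t + 2) → Fin m → ℝ) =
      Fin.snoc u (u 0) + Pi.single 0 v := by
    funext i
    cases i using Fin.lastCases <;> simp [u', Pi.single_apply]
  have hresponse := hD x hx (Fin.snoc u (u 0)) (Fin.snoc u' (u 0)) v
    (Fin.lastCases (by simpa using hu 0) (by simpa using hu))
    (Fin.lastCases (by simpa using hu 0) (by simpa using hu')) hsnoc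
  rw [iterDyn_snoc, iterDyn_snoc, h _ (iterDyn_mem hf hx hu') _ (hu 0), h _ hz _ (hu 0),
    h.iterDyn_add_single hf hp hx hu hu' rfl, map_add, map_add] at hresponse
  simp only [LinearMap.comp_apply, LinearMap.sub_apply]
  linear_combination hresponse

lemma exists_eq_linear_add [Fintype ι] {L R : Type*} [AddCommGroup L] [Module ℝ L]
    [AddCommGroup R] [Module ℝ R] (h : IsLureForm f X U A B p G) (hX : Convex ℝ X)
    (hU : IsOpen U) (hf : ∀ x ∈ X, ∀ u ∈ U, f x u ∈ X)
    (hsurj : ∀ y ∈ X, ∃ x ∈ X, ∃ u ∈ U, f x u = y)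
    (hp : ∀ s < t, p ∘ₗ (A ^ s) ∘ₗ B = 0)
    (hpred : HasNStepLinearPredictor f X U (t + 2)) (e : E ≃ₗ[ℝ] L × R)
    (he : ∀ y, (e y).2 = 0 → y ∈ LinearMap.range (p ∘ₗ (A ^ t) ∘ₗ B)) :
    ∃ (Λ : L →ₗ[ℝ] (ι → ℝ)) (Γ : R → (ι → ℝ)),
      ∀ x ∈ X, G (p x) = Λ (e (p x)).1 + Γ (e (p x)).2 := by
  obtain ⟨D, hD⟩ := h.exists_eventually_eq_add hU hf hsurj hp hpred
  obtain ⟨Λ, Γ, hG⟩ := exists_eq_linear_add_of_convex (hX.linear_image p) hD e he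
  exact ⟨Λ, Γ, fun x hx => hG _ (Set.mem_image_of_mem p hx)⟩

end IsLureForm

section Chain

variable {k m : ℕ} {dims : Fin (k + 1) → ℕ}

/-- The projection `blk · i` onto the `i`-th block, as a linear map. -/
def blkProj (dims : Fin (k + 1) → ℕ) (i : Fin (k + 1)) :
    (Blk dims → ℝ) →ₗ[ℝ] (Fin (dims i) → ℝ) :=
  LinearMap.funLeft ℝ ℝ fun j => ⟨i, j⟩

/-- The linear map into block-partitioned states with prescribed blocks. -/
def ofBlocks {V : Type*} [AddCommGroup V] [Module ℝ V]
    (φ : (i : Fin (k + 1)) → V →ₗ[ℝ] (Fin (dims i) → ℝ)) : V →ₗ[ℝ] (Blk dims → ℝ) :=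
  LinearMap.pi fun q => LinearMap.proj q.2 ∘ₗ φ q.1

/-- The linear state part `A` of a chain system in Lur'e form. -/
def chainA (M : (i : Fin k) → Matrix (Fin (dims i.succ)) (Fin (dims i.castSucc)) ℝ)
    (C : (i : Fin (k + 1)) → Matrix (Fin (dims i)) (Blk dims) ℝ) :
    (Blk dims → ℝ) →ₗ[ℝ] (Blk dims → ℝ) :=
  ofBlocks (Fin.cons (C 0).mulVecLin
    fun i => (M i).mulVecLin ∘ₗ blkProj dims i.castSucc + (C i.succ).mulVecLin)

/-- The input part `B` of a chain system in Lur'e form: the input enters the first block only. -/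
def chainB (M₀ : Matrix (Fin (dims 0)) (Fin m) ℝ) : (Fin m → ℝ) →ₗ[ℝ] (Blk dims → ℝ) :=
  ofBlocks (Fin.cons M₀.mulVecLin fun _ => 0)

lemma blk_ext {x y : Blk dims → ℝ} (h : ∀ i, blk x i = blk y i) : x = y :=
  funext fun ⟨i, j⟩ => congrFun (h i) j

variable {f : (Blk dims → ℝ) → (Fin m → ℝ) → (Blk dims → ℝ)}
  {X : Set (Blk dims → ℝ)} {U : Set (Fin m → ℝ)}
  {M₀ : Matrix (Fin (dims 0)) (Fin m) ℝ}
  {M : (i : Fin k) → Matrix (Fin (dims i.succ)) (Fin (dims i.castSucc)) ℝ}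
  {C : (i : Fin (k + 1)) → Matrix (Fin (dims i)) (Blk dims) ℝ}
  {g : (i : Fin (k + 1)) → (Fin (dims (Fin.last k)) → ℝ) → Fin (dims i) → ℝ}

lemma blk_chainA_zero (x : Blk dims → ℝ) : blk (chainA M C x) 0 = C 0 *ᵥ x := rfl

lemma blk_chainA_succ (x : Blk dims → ℝ) (i : Fin k) :
    blk (chainA M C x) i.succ = M i *ᵥ blk x i.castSucc + C i.succ *ᵥ x := rfl

lemma blk_chainB_zero (u : Fin m → ℝ) : blk (chainB M₀ u : Blk dims → ℝ) 0 = M₀ *ᵥ u := rfl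

lemma blk_chainB_succ (u : Fin m → ℝ) (i : Fin k) :
    blk (chainB M₀ u : Blk dims → ℝ) i.succ = 0 := rfl

namespace IsChainSystem

lemma isLureForm (h : IsChainSystem dims f X U M₀ M C g) :
    IsLureForm f X U (chainA M C) (chainB M₀) (blkProj dims (Fin.last k))
      (fun y q => g q.1 y q.2) := by
  intro x hx u hu
  obtain ⟨hzero, hsucc⟩ := h.2.2.2 x hx u hu
  apply blk_ext
  intro i
  change _ = blk (chainA M C x) i + blk (chainB M₀ u) i + g i (blk x (Fin.last k))
  cases i using Fin.cases with
  | zero => rw [hzero, blk_chainA_zero, blk_chainB_zero, add_comm (M₀ *ᵥ u)]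
  | succ i => rw [hsucc i, blk_chainA_succ, blk_chainB_succ, add_zero]

lemma mulVec_eq_sum (h : IsChainSystem dims f X U M₀ M C g) (i : Fin (k + 1))
    (x : Blk dims → ℝ) :
    C i *ᵥ x = ∑ j : Fin k, (C i).submatrix id (fun c => ⟨j.castSucc, c⟩) *ᵥ blk x j.castSucc := by
  funext a
  have hlast (c) : C i a ⟨Fin.last k, c⟩ = 0 := h.1 i _ (by simp) a
  rw [Finset.sum_apply, mulVec, dotProduct, Fintype.sum_sigma, Fin.sum_univ_castSucc]
  simp only [hlast, zero_mul, Finset.sum_const_zero, add_zero]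
  rfl

lemma submatrix_eq_zero (h : IsChainSystem dims f X U M₀ M C g) {i j : Fin (k + 1)}
    (hji : j < i) : (C i).submatrix id (fun c => ⟨j, c⟩) = 0 := by
  ext a c
  exact h.1 i _ (fun hij => hji.not_ge hij.1) a

lemma mulVec_eq_zero (h : IsChainSystem dims f X U M₀ M C g) {i : Fin (k + 1)}
    {x : Blk dims → ℝ} (hx : ∀ j, i ≤ j → j < Fin.last k → blk x j = 0) : C i *ᵥ x = 0 := by
  rw [h.mulVec_eq_sum]
  refine Finset.sum_eq_zero fun j _ => ?_
  rcases lt_or_ge j.castSucc i with hji | hij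
  · rw [h.submatrix_eq_zero hji, zero_mulVec]
  · rw [hx _ hij j.castSucc_lt_last, mulVec_zero]

lemma blk_chainA_pow_eq_zero (h : IsChainSystem dims f X U M₀ M C g) (v : Fin m → ℝ)
    {t : ℕ} {j : Fin (k + 1)} (hj : t < (j : ℕ)) :
    blk ((chainA M C ^ t) (chainB M₀ v)) j = 0 := by
  induction t generalizing j with
  | zero =>
    obtain ⟨i, rfl⟩ := Fin.exists_succ_eq_of_ne_zero (Fin.pos_iff_ne_zero.mp hj)
    rfl
  | succ t ih =>
    obtain ⟨i, rfl⟩ := Fin.exists_succ_eq_of_ne_zero (Fin.pos_iff_ne_zero.mp (Nat.zero_lt_of_lt hj))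
    have hi : t < (i.castSucc : ℕ) := Nat.lt_of_succ_lt_succ hj
    rw [pow_succ', Module.End.mul_apply, blk_chainA_succ, ih hi, mulVec_zero, zero_add]
    exact h.mulVec_eq_zero fun j hij _ => ih (hi.trans (i.castSucc_lt_succ.trans_le hij))

lemma blk_chainA_pow_succ (h : IsChainSystem dims f X U M₀ M C g) (v : Fin m → ℝ) (i : Fin k) :
    blk ((chainA M C ^ (i.succ : ℕ)) (chainB M₀ v)) i.succ =
      M i *ᵥ blk ((chainA M C ^ (i.castSucc : ℕ)) (chainB M₀ v)) i.castSucc := by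
  have hC : C i.succ *ᵥ ((chainA M C ^ (i : ℕ)) (chainB M₀ v)) = 0 :=
    h.mulVec_eq_zero fun j hij _ => h.blk_chainA_pow_eq_zero v (Nat.lt_of_succ_le hij)
  rw [Fin.val_succ, Fin.val_castSucc, pow_succ', Module.End.mul_apply, blk_chainA_succ, hC,
    add_zero]

lemma blk_chainA_pow_surjective (h : IsChainSystem dims f X U M₀ M C g) (i : Fin (k + 1))
    (hi : (i : ℕ) ≤ k - 1) :
    Function.Surjective fun v : Fin m → ℝ =>
      blk ((chainA M C ^ (i : ℕ)) (chainB M₀ v)) i := by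
  induction i using Fin.induction with
  | zero => exact (mulVec_surjective_iff_rank_eq_card M₀).mpr (by simpa using h.2.1)
  | succ i ih =>
    have hM : Function.Surjective (M i).mulVec :=
      (mulVec_surjective_iff_rank_eq_card (M i)).mpr (by simpa using h.2.2.1 i hi)
    simp only [h.blk_chainA_pow_succ]
    exact hM.comp (ih ((Nat.le_succ _).trans hi))

end IsChainSystem

end Chain

section Refinement

variable {k m : ℕ} {dims : Fin (k + 2) → ℕ}

/-- The dynamics `f` are again in chain form, with the last block `y` of a state replaced by the
pair of blocks `ξ y` and `η y` (the paper's `x̄_k` and `x̄_{k+1}`), the nonlinearity depending on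
`η y` only, and all coupling matrices except the last one of full row rank. -/
def HasRefinedChainForm {r s : ℕ} (f : (Blk dims → ℝ) → (Fin m → ℝ) → (Blk dims → ℝ))
    (X : Set (Blk dims → ℝ)) (U : Set (Fin m → ℝ))
    (ξ : (Fin (dims (Fin.last (k + 1))) → ℝ) → Fin r → ℝ)
    (η : (Fin (dims (Fin.last (k + 1))) → ℝ) → Fin s → ℝ) : Prop :=
  ∃ (Mb₀ : Matrix (Fin (dims (0 : Fin (k + 1)).castSucc)) (Fin m) ℝ)
    (Mb : (i : Fin k) → Matrix (Fin (dims i.succ.castSucc)) (Fin (dims i.castSucc.castSucc)) ℝ)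
    (MbK : Matrix (Fin r) (Fin (dims (Fin.last k).castSucc)) ℝ)
    (MbK1 : Matrix (Fin s) (Fin r) ℝ)
    (Cb : (i : Fin (k + 1)) → (j : Fin (k + 1)) →
      Matrix (Fin (dims i.castSucc)) (Fin (dims j.castSucc)) ℝ)
    (CbK : (i : Fin (k + 1)) → Matrix (Fin (dims i.castSucc)) (Fin r) ℝ)
    (CbKK : Matrix (Fin r) (Fin r) ℝ)
    (gb : (i : Fin (k + 1)) → (Fin s → ℝ) → Fin (dims i.castSucc) → ℝ)
    (gbK : (Fin s → ℝ) → Fin r → ℝ) (gbK1 : (Fin s → ℝ) → Fin s → ℝ),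
    Mb₀.rank = dims (0 : Fin (k + 1)).castSucc ∧
    (∀ i : Fin k, (Mb i).rank = dims i.succ.castSucc) ∧
    MbK.rank = r ∧
    (∀ i j : Fin (k + 1), (j : ℕ) < (i : ℕ) → Cb i j = 0) ∧
    ∀ x ∈ X, ∀ u ∈ U,
      (blk (f x u) (0 : Fin (k + 1)).castSucc =
        Mb₀ *ᵥ u + ∑ j : Fin (k + 1), Cb 0 j *ᵥ blk x j.castSucc
          + CbK 0 *ᵥ ξ (blk x (Fin.last (k + 1))) + gb 0 (η (blk x (Fin.last (k + 1))))) ∧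
      (∀ i : Fin k, blk (f x u) i.succ.castSucc =
        Mb i *ᵥ blk x i.castSucc.castSucc + ∑ j : Fin (k + 1), Cb i.succ j *ᵥ blk x j.castSucc
          + CbK i.succ *ᵥ ξ (blk x (Fin.last (k + 1)))
          + gb i.succ (η (blk x (Fin.last (k + 1))))) ∧
      (ξ (blk (f x u) (Fin.last (k + 1))) =
        MbK *ᵥ blk x (Fin.last k).castSucc + CbKK *ᵥ ξ (blk x (Fin.last (k + 1)))
          + gbK (η (blk x (Fin.last (k + 1))))) ∧
      (η (blk (f x u) (Fin.last (k + 1))) =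
        MbK1 *ᵥ ξ (blk x (Fin.last (k + 1))) + gbK1 (η (blk x (Fin.last (k + 1)))))

variable {f : (Blk dims → ℝ) → (Fin m → ℝ) → (Blk dims → ℝ)}
  {X : Set (Blk dims → ℝ)} {U : Set (Fin m → ℝ)}
  {M₀ : Matrix (Fin (dims 0)) (Fin m) ℝ}
  {M : (i : Fin (k + 1)) → Matrix (Fin (dims i.succ)) (Fin (dims i.castSucc)) ℝ}
  {C : (i : Fin (k + 2)) → Matrix (Fin (dims i)) (Blk dims) ℝ}
  {g : (i : Fin (k + 2)) → (Fin (dims (Fin.last (k + 1))) → ℝ) → Fin (dims i) → ℝ}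

namespace IsChainSystem

lemma range_blkProj_last_comp_chainA_pow (h : IsChainSystem dims f X U M₀ M C g) :
    LinearMap.range (blkProj dims (Fin.last (k + 1)) ∘ₗ (chainA M C ^ (k + 1)) ∘ₗ chainB M₀) =
      LinearMap.range (M (Fin.last k)).mulVecLin := by
  apply SetLike.coe_injective
  have hcomp : (fun v => blk ((chainA M C ^ (k + 1)) (chainB M₀ v)) (Fin.last (k + 1))) =
      (M (Fin.last k)).mulVec ∘ fun v =>
        blk ((chainA M C ^ k) (chainB M₀ v)) (Fin.last k).castSucc :=
    funext fun v => h.blk_chainA_pow_succ v (Fin.last k)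
  have hsurj := h.blk_chainA_pow_surjective (Fin.last k).castSucc le_rfl
  exact (congrArg Set.range hcomp).trans (hsurj.range_comp _)

lemma blk_last_eq (h : IsChainSystem dims f X U M₀ M C g) {x : Blk dims → ℝ} (hx : x ∈ X)
    {u : Fin m → ℝ} (hu : u ∈ U) :
    blk (f x u) (Fin.last k).succ = M (Fin.last k) *ᵥ blk x (Fin.last k).castSucc +
      g (Fin.last k).succ (blk x (Fin.last (k + 1))) := by
  have hC : C (Fin.last k).succ *ᵥ x = 0 :=
    h.mulVec_eq_zero fun j hj hj' => absurd hj hj'.not_ge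
  rw [(h.2.2.2 x hx u hu).2, hC, add_zero]

lemma hasRefinedChainForm (h : IsChainSystem dims f X U M₀ M C g) {r s : ℕ}
    (e : (Fin (dims (Fin.last (k + 1))) → ℝ) ≃ₗ[ℝ] (Fin r → ℝ) × (Fin s → ℝ))
    (he : ∀ y, y ∈ LinearMap.range (M (Fin.last k)).mulVecLin ↔ (e y).2 = 0)
    (Λ : (Fin r → ℝ) →ₗ[ℝ] (Blk dims → ℝ)) (Γ : (Fin s → ℝ) → (Blk dims → ℝ))
    (hg : ∀ x ∈ X, ∀ i, g i (blk x (Fin.last (k + 1))) =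
      blk (Λ (e (blk x (Fin.last (k + 1)))).1) i + blk (Γ (e (blk x (Fin.last (k + 1)))).2) i) :
    HasRefinedChainForm f X U (fun y => (e y).1) (fun y => (e y).2) := by
  let Λb (i : Fin (k + 2)) : (Fin r → ℝ) →ₗ[ℝ] (Fin (dims i) → ℝ) := blkProj dims i ∘ₗ Λ
  let ξ := LinearMap.fst ℝ (Fin r → ℝ) (Fin s → ℝ) ∘ₗ e.toLinearMap
  let η := LinearMap.snd ℝ (Fin r → ℝ) (Fin s → ℝ) ∘ₗ e.toLinearMap
  have hξM : Function.Surjective (ξ ∘ₗ (M (Fin.last k)).mulVecLin) := fun c => by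
    obtain ⟨z, hz⟩ := (he (e.symm (c, 0))).mpr (by simp)
    exact ⟨z, by simp [ξ, hz]⟩
  have hηM (z) : η (M (Fin.last k) *ᵥ z) = 0 := (he _).mp ⟨z, rfl⟩
  refine ⟨M₀, fun i => M i.castSucc, LinearMap.toMatrix' (ξ ∘ₗ (M (Fin.last k)).mulVecLin),
    LinearMap.toMatrix' (η ∘ₗ Λb (Fin.last (k + 1))),
    fun i j => (C i.castSucc).submatrix id fun c => ⟨j.castSucc, c⟩,
    fun i => LinearMap.toMatrix' (Λb i.castSucc),
    LinearMap.toMatrix' (ξ ∘ₗ Λb (Fin.last (k + 1))),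
    fun i w => blk (Γ w) i.castSucc, fun w => ξ (blk (Γ w) (Fin.last (k + 1))),
    fun w => η (blk (Γ w) (Fin.last (k + 1))),
    h.2.1, fun i => h.2.2.1 i.castSucc (by simp),
    (rank_toMatrix'_eq_card_of_surjective hξM).trans (Fintype.card_fin r),
    fun i j hji => h.submatrix_eq_zero (Fin.castSucc_lt_castSucc_iff.mpr hji),
    fun x hx u hu => ?_⟩
  obtain ⟨hzero, hsucc⟩ := h.2.2.2 x hx u hu
  have hlast := h.blk_last_eq hx hu
  simp only [hg x hx, h.mulVec_eq_sum, ← add_assoc] at hzero hsucc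
  rw [hg x hx] at hlast
  simp only [LinearMap.toMatrix'_mulVec]
  refine ⟨hzero, fun i => hsucc i.castSucc, (congrArg ξ hlast).trans ?_,
    (congrArg η hlast).trans ?_⟩
  · rw [map_add, map_add, ← add_assoc]
    rfl
  · rw [map_add, map_add, hηM, zero_add]
    rfl

end IsChainSystem

end Refinement

theorem chain_Mk_rank_deficient_decomposition_general
    {k m : ℕ} (dims : Fin (k + 2) → ℕ)
    (f : (Blk dims → ℝ) → (Fin m → ℝ) → (Blk dims → ℝ))
    (X : Set (Blk dims → ℝ)) (U : Set (Fin m → ℝ))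
    (hXconv : Convex ℝ X) (hUopen : IsOpen U)
    (hf : ∀ x ∈ X, ∀ u ∈ U, f x u ∈ X)
    (hsurj : ∀ y ∈ X, ∃ x ∈ X, ∃ u ∈ U, f x u = y)
    (M₀ : Matrix (Fin (dims 0)) (Fin m) ℝ)
    (M : (i : Fin (k + 1)) → Matrix (Fin (dims i.succ)) (Fin (dims i.castSucc)) ℝ)
    (C : (i : Fin (k + 2)) → Matrix (Fin (dims i)) (Blk dims) ℝ)
    (g : (i : Fin (k + 2)) → (Fin (dims (Fin.last (k + 1))) → ℝ) → Fin (dims i) → ℝ)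
    (hchain : IsChainSystem dims f X U M₀ M C g)
    (hpred : HasNStepLinearPredictor f X U (k + 3))
    (rk : ℕ) (hMk : (M (Fin.last k)).rank = rk) :
    ∃ (T : Matrix (Fin rk ⊕ Fin (dims (Fin.last (k + 1)) - rk))
            (Fin (dims (Fin.last (k + 1)))) ℝ)
      (S : Matrix (Fin (dims (Fin.last (k + 1))))
            (Fin rk ⊕ Fin (dims (Fin.last (k + 1)) - rk)) ℝ),
      T * S = 1 ∧ S * T = 1 ∧
        HasRefinedChainForm f X U (fun y a => (T *ᵥ y) (Sum.inl a))
          (fun y b => (T *ᵥ y) (Sum.inr b)) := by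
  have hrk : rk ≤ dims (Fin.last (k + 1)) := hMk ▸ (M (Fin.last k)).rank_le_height
  obtain ⟨e, he⟩ := exists_linearEquiv_prod_mem_iff_snd_eq_zero
    (E := Fin (dims (Fin.last (k + 1))) → ℝ) (L := Fin rk → ℝ)
    (R := Fin (dims (Fin.last (k + 1)) - rk) → ℝ) (LinearMap.range (M (Fin.last k)).mulVecLin)
    (hMk.trans (by simp)) (by simp [hrk])
  obtain ⟨T, S, hTS, hST, hξ, hη⟩ := exists_matrix_mulVec_sum_eq e
  obtain ⟨Λ, Γ, hg⟩ := hchain.isLureForm.exists_eq_linear_add hXconv hUopen hf hsurj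
    (t := k + 1) (fun s hs => LinearMap.ext fun v => hchain.blk_chainA_pow_eq_zero v hs) hpred e
    (fun y hy => hchain.range_blkProj_last_comp_chainA_pow ▸ (he y).mpr hy)
  refine ⟨T, S, hTS, hST, ?_⟩
  rw [hξ, hη]
  exact hchain.hasRefinedChainForm e he Λ Γ fun x hx i => congrArg (blk · i) (hg x hx)

/-- **Rank-based characterization for `(k+1)`-step linear predictors, statement 2.**
For a chain-structured system with `k+2` Lean-blocks (the paper's `k` equals `k+2`) on an
open convex state set with open input set and surjective dynamics: if the system admits a
`(k+1)`-step linear predictor (paper count; `k+3` steps here) and `rank(M_k) = r_k` with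
`0 < r_k < n_k`, then there is an invertible matrix `T̄` acting on the last block only such
that, in the new coordinates (`x̄_i = x_i` for the first blocks and
`col(x̄_k, x̄_{k+1}) = T̄ x_k`), the dynamics again take a chain form in which the
nonlinearity is concentrated in the strictly smaller block `x̄_{k+1}`, all chain coefficient
matrices `M̄₁, …, M̄_k` have full row rank, and each `C̄_i` acts only on the blocks
`x̄_{i:k}`. -/
theorem chain_Mk_rank_deficient_decomposition
    {k m : ℕ} (dims : Fin (k + 2) → ℕ)
    (f : (Blk dims → ℝ) → (Fin m → ℝ) → (Blk dims → ℝ))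
    (X : Set (Blk dims → ℝ)) (U : Set (Fin m → ℝ))
    (hXopen : IsOpen X) (hXconv : Convex ℝ X) (hUopen : IsOpen U)
    (hf : ∀ x ∈ X, ∀ u ∈ U, f x u ∈ X)
    (hsurj : ∀ y ∈ X, ∃ x ∈ X, ∃ u ∈ U, f x u = y)
    (M₀ : Matrix (Fin (dims 0)) (Fin m) ℝ)
    (M : (i : Fin (k + 1)) → Matrix (Fin (dims i.succ)) (Fin (dims i.castSucc)) ℝ)
    (C : (i : Fin (k + 2)) → Matrix (Fin (dims i)) (Blk dims) ℝ)
    (g : (i : Fin (k + 2)) → (Fin (dims (Fin.last (k + 1))) → ℝ) → Fin (dims i) → ℝ)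
    (hchain : IsChainSystem dims f X U M₀ M C g)
    (hpred : HasNStepLinearPredictor f X U (k + 3))
    (rk : ℕ) (hrk_pos : 0 < rk) (hrk_lt : rk < dims (Fin.last (k + 1)))
    (hMk : (M (Fin.last k)).rank = rk) :
    ∃ (T : Matrix (Fin rk ⊕ Fin (dims (Fin.last (k + 1)) - rk))
            (Fin (dims (Fin.last (k + 1)))) ℝ)
      (S : Matrix (Fin (dims (Fin.last (k + 1))))
            (Fin rk ⊕ Fin (dims (Fin.last (k + 1)) - rk)) ℝ),
      T * S = 1 ∧ S * T = 1 ∧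
      ∃ (Mb₀ : Matrix (Fin (dims (0 : Fin (k + 1)).castSucc)) (Fin m) ℝ)
        (Mb : (i : Fin k) →
          Matrix (Fin (dims i.succ.castSucc)) (Fin (dims i.castSucc.castSucc)) ℝ)
        (MbK : Matrix (Fin rk) (Fin (dims (Fin.last k).castSucc)) ℝ)
        (MbK1 : Matrix (Fin (dims (Fin.last (k + 1)) - rk)) (Fin rk) ℝ)
        (Cb : (i : Fin (k + 1)) → (j : Fin (k + 1)) →
          Matrix (Fin (dims i.castSucc)) (Fin (dims j.castSucc)) ℝ)
        (CbK : (i : Fin (k + 1)) → Matrix (Fin (dims i.castSucc)) (Fin rk) ℝ)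
        (CbKK : Matrix (Fin rk) (Fin rk) ℝ)
        (gb : (i : Fin (k + 1)) →
          (Fin (dims (Fin.last (k + 1)) - rk) → ℝ) → Fin (dims i.castSucc) → ℝ)
        (gbK : (Fin (dims (Fin.last (k + 1)) - rk) → ℝ) → Fin rk → ℝ)
        (gbK1 : (Fin (dims (Fin.last (k + 1)) - rk) → ℝ) →
          Fin (dims (Fin.last (k + 1)) - rk) → ℝ),
        Mb₀.rank = dims (0 : Fin (k + 1)).castSucc ∧
        (∀ i : Fin k, (Mb i).rank = dims i.succ.castSucc) ∧
        MbK.rank = rk ∧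
        (∀ i j : Fin (k + 1), (j : ℕ) < (i : ℕ) → Cb i j = 0) ∧
        (∀ x ∈ X, ∀ u ∈ U,
          (blk (f x u) (0 : Fin (k + 1)).castSucc =
            Mb₀.mulVec u
              + (∑ j : Fin (k + 1), (Cb 0 j).mulVec (blk x j.castSucc))
              + (CbK 0).mulVec (fun a => T.mulVec (blk x (Fin.last (k + 1))) (Sum.inl a))
              + gb 0 (fun a => T.mulVec (blk x (Fin.last (k + 1))) (Sum.inr a))) ∧
          (∀ i : Fin k,
            blk (f x u) i.succ.castSucc =
              (Mb i).mulVec (blk x i.castSucc.castSucc)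
                + (∑ j : Fin (k + 1), (Cb i.succ j).mulVec (blk x j.castSucc))
                + (CbK i.succ).mulVec
                    (fun a => T.mulVec (blk x (Fin.last (k + 1))) (Sum.inl a))
                + gb i.succ (fun a => T.mulVec (blk x (Fin.last (k + 1))) (Sum.inr a))) ∧
          ((fun a => T.mulVec (blk (f x u) (Fin.last (k + 1))) (Sum.inl a)) =
              MbK.mulVec (blk x (Fin.last k).castSucc)
                + CbKK.mulVec (fun a => T.mulVec (blk x (Fin.last (k + 1))) (Sum.inl a))
                + gbK (fun a => T.mulVec (blk x (Fin.last (k + 1))) (Sum.inr a))) ∧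
          ((fun a => T.mulVec (blk (f x u) (Fin.last (k + 1))) (Sum.inr a)) =
              MbK1.mulVec (fun a => T.mulVec (blk x (Fin.last (k + 1))) (Sum.inl a))
                + gbK1 (fun a => T.mulVec (blk x (Fin.last (k + 1))) (Sum.inr a)))) := by
  exact chain_Mk_rank_deficient_decomposition_general dims f X U hXconv hUopen hf hsurj M₀ M C g
    hchain hpred rk hMk
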